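/- arXiv:1603.06552 — 6 statements merged into one kernel-verified Lean document; each statement's English description precedes it below -/
import Mathlib

section
/- Let F be a finite collection of finite sets such that |⋂Γ₁ − ⋃Γ₂| = |⋂Γ₂ − ⋃Γ₁| holds for every partition of F into two nonempty subcollections Γ₁, Γ₂ (i.e., Γ₁, Γ₂ nonempty, disjoint, with Γ₁ ∪ Γ₂ = F). Then every set D ∈ F satisfies 2·|D| = |⋃F| + |⋂F|; in particular all members of F have the same cardinality. -/
open Finset

/-- The union of a finite collection of finite sets. -/
def famUnion (Γ : Finset (Finset ℕ)) : Finset ℕ := Γ.sup id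

/-- The intersection of a finite collection of finite sets
(equal to the usual intersection when the collection is nonempty). -/
def famInter (Γ : Finset (Finset ℕ)) : Finset ℕ :=
  (Γ.sup id).filter (fun x => ∀ A ∈ Γ, x ∈ A)

/-- `F` is a hereditary König–Egerváry (hke) collection with `α(F) = α`:
`α` is a positive integer and `|⋃Γ| + |⋂Γ| = 2α` for every nonempty subcollection `Γ` of `F`. -/
def IsHKE (F : Finset (Finset ℕ)) (α : ℕ) : Prop :=
  0 < α ∧ ∀ Γ ⊆ F, Γ.Nonempty → (famUnion Γ).card + (famInter Γ).card = 2 * α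

/-- if `|⋂Γ₁ − ⋃Γ₂| = |⋂Γ₂ − ⋃Γ₁|` holds for every partition of `F` into two
nonempty subcollections `Γ₁, Γ₂`, then every `D ∈ F` satisfies `2|D| = |⋃F| + |⋂F|`. -/
theorem card_eq_of_partitions (F : Finset (Finset ℕ))
    (h : ∀ Γ₁ Γ₂ : Finset (Finset ℕ), Γ₁.Nonempty → Γ₂.Nonempty → Disjoint Γ₁ Γ₂ →
      Γ₁ ∪ Γ₂ = F →
      (famInter Γ₁ \ famUnion Γ₂).card = (famInter Γ₂ \ famUnion Γ₁).card) :
    ∀ D ∈ F, 2 * D.card = (famUnion F).card + (famInter F).card := by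
  classical
  intro D hD
  have mU : ∀ (Γ : Finset (Finset ℕ)) x, x ∈ famUnion Γ ↔ ∃ A ∈ Γ, x ∈ A := by
    intro Γ x; simp [famUnion, Finset.mem_sup]
  have mI : ∀ (Γ : Finset (Finset ℕ)), Γ.Nonempty → ∀ x, (x ∈ famInter Γ ↔ ∀ A ∈ Γ, x ∈ A) := by
    intro Γ ⟨B, hB⟩ x
    have := mU Γ x
    unfold famUnion at this
    simp only [famInter, Finset.mem_filter, this]
    exact ⟨fun h => h.2, fun h => ⟨⟨B, hB, h B hB⟩, h⟩⟩
  have hF : F.Nonempty := ⟨D, hD⟩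
  let T : ℕ → Finset (Finset ℕ) := fun x => F.filter (fun A => x ∈ A)
  have hT : ∀ x A, A ∈ T x ↔ A ∈ F ∧ x ∈ A := by intro x A; simp [T]
  have key : ∀ S ⊆ F, S.Nonempty → (F \ S).Nonempty → ∀ x,
      (x ∈ famInter S \ famUnion (F \ S) ↔ T x = S) := by
    intro S hS hn _ x
    rw [Finset.mem_sdiff, mI S hn, mU]
    constructor
    · rintro ⟨h1, h2⟩
      ext A
      rw [hT]
      constructor
      · rintro ⟨a, b⟩
        by_contra hc
        exact h2 ⟨A, Finset.mem_sdiff.2 ⟨a, hc⟩, b⟩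
      · intro hA
        exact ⟨hS hA, h1 A hA⟩
    · intro e
      refine ⟨fun A hA => ((hT x A).1 (e ▸ hA)).2, ?_⟩
      rintro ⟨A, hA, hx⟩
      rw [Finset.mem_sdiff] at hA
      exact hA.2 (e ▸ (hT x A).2 ⟨hA.1, hx⟩)
  let P := F.powerset.filter (fun S => D ∈ S ∧ S ≠ F)
  have hP : ∀ S, S ∈ P ↔ S ⊆ F ∧ D ∈ S ∧ S ≠ F := by intro S; simp [P]
  have hDU : D ⊆ famUnion F := fun x hx => (mU F x).2 ⟨D, hD, hx⟩
  have hID : famInter F ⊆ D := fun x hx => (mI F hF x).1 hx D hD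
  have hTF : ∀ x, T x ⊆ F := fun x => Finset.filter_subset _ _
  have e1 : (D \ famInter F).card = ∑ S ∈ P, ((D \ famInter F).filter (fun x => T x = S)).card := by
    apply Finset.card_eq_sum_card_fiberwise
    intro x hx
    have hx : x ∈ D \ famInter F := hx
    show T x ∈ P
    rw [Finset.mem_sdiff, mI F hF] at hx
    refine (hP _).2 ⟨hTF x, (hT x D).2 ⟨hD, hx.1⟩, fun e => hx.2 fun A hA => ?_⟩
    exact ((hT x A).1 (e ▸ hA)).2
  have e2 : (famUnion F \ D).card
      = ∑ S ∈ P, ((famUnion F \ D).filter (fun x => F \ T x = S)).card := by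
    apply Finset.card_eq_sum_card_fiberwise
    intro x hx
    have hx : x ∈ famUnion F \ D := hx
    show F \ T x ∈ P
    rw [Finset.mem_sdiff, mU] at hx
    obtain ⟨⟨A, hA, hxA⟩, hxD⟩ := hx
    refine (hP _).2 ⟨Finset.sdiff_subset, Finset.mem_sdiff.2
      ⟨hD, fun h => hxD ((hT x D).1 h).2⟩, fun e => ?_⟩
    have h3 : A ∈ F \ T x := by rw [e]; exact hA
    exact (Finset.mem_sdiff.1 h3).2 ((hT x A).2 ⟨hA, hxA⟩)
  have e3 : (D \ famInter F).card = (famUnion F \ D).card := by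
    rw [e1, e2]
    apply Finset.sum_congr rfl
    intro S hS
    obtain ⟨hSF, hDS, hne⟩ := (hP S).1 hS
    have n1 : S.Nonempty := ⟨D, hDS⟩
    have n2 : (F \ S).Nonempty := by
      rw [Finset.sdiff_nonempty]
      exact fun h => hne (hSF.antisymm h)
    have hss : F \ (F \ S) = S := Finset.sdiff_sdiff_eq_self hSF
    have hh := h S (F \ S) n1 n2 Finset.disjoint_sdiff (Finset.union_sdiff_of_subset hSF)
    have k1 := key S hSF n1 n2
    have k2 := key (F \ S) Finset.sdiff_subset n2 (by rw [hss]; exact n1)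
    rw [hss] at k2
    have f1 : (D \ famInter F).filter (fun x => T x = S) = famInter S \ famUnion (F \ S) := by
      ext x
      rw [k1, Finset.mem_filter, Finset.mem_sdiff, mI F hF]
      refine ⟨fun h => h.2, fun e => ⟨⟨((hT x D).1 (e ▸ hDS)).2, fun hall => hne ?_⟩, e⟩⟩
      rw [← e]
      exact Finset.filter_true_of_mem hall
    have f2 : (famUnion F \ D).filter (fun x => F \ T x = S)
        = famInter (F \ S) \ famUnion S := by
      ext x
      rw [k2, Finset.mem_filter, Finset.mem_sdiff, mU]
      constructor
      · rintro ⟨_, e⟩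
        rw [← e, Finset.sdiff_sdiff_eq_self (hTF x)]
      · intro e
        refine ⟨⟨?_, fun hx => ?_⟩, by rw [e, hss]⟩
        · obtain ⟨A, hA⟩ := n2
          rw [← e] at hA
          exact ⟨A, (hT x A).1 hA⟩
        · have h4 : D ∈ T x := (hT x D).2 ⟨hD, hx⟩
          rw [e] at h4
          exact (Finset.mem_sdiff.1 h4).2 hDS
    rw [f1, f2, hh]
  have c1 := Finset.card_sdiff_add_card_eq_card hDU
  have c2 := Finset.card_sdiff_add_card_eq_card hID
  omega
end

section
/- Let F be an hke collection and let A ∈ F. Then the map f_A : F → P(A) defined by f_A(D) = A ∩ D is injective; consequently |F| ≤ 2^{α(F)}. -/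
open Finset

theorem hke_sub_aux (F : Finset (Finset ℕ)) (α : ℕ) (hF : IsHKE F α)
    (A D E : Finset ℕ) (hA : A ∈ F) (hD : D ∈ F) (hE : E ∈ F) (h : A ∩ D = A ∩ E) : E ⊆ D := by
  have h2 := hF.2 {A, D} (by intro x hx; simp at hx; rcases hx with rfl | rfl <;> assumption)
    (by simp)
  have h3 := hF.2 {A, D, E}
    (by intro x hx; simp at hx; rcases hx with rfl | rfl | rfl <;> assumption) (by simp)
  have hm : ∀ x, x ∈ A → (x ∈ D ↔ x ∈ E) := by
    intro x hx
    have := congrArg (fun S => x ∈ S) h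
    simpa [hx] using this
  have hi : famInter {A, D, E} = famInter {A, D} := by
    ext x
    have := hm x
    simp [famInter]
    tauto
  have hs : famUnion {A, D} ⊆ famUnion {A, D, E} := by
    intro x
    simp [famUnion]
    tauto
  have he := Finset.eq_of_subset_of_card_le hs (by rw [hi] at h3; omega)
  intro x hx
  have hx' : x ∈ famUnion {A, D} := by
    rw [he]; simp [famUnion, hx]
  simp [famUnion] at hx'
  rcases hx' with h' | h'
  · exact (hm x h').2 hx
  · exact h'

/-- for an hke collection `F` and `A ∈ F`, the map `D ↦ A ∩ D` is injective
on `F`; consequently `|F| ≤ 2 ^ α(F)`. -/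
theorem interMap_injOn_of_isHKE (F : Finset (Finset ℕ)) (α : ℕ) (hF : IsHKE F α)
    (A : Finset ℕ) (hA : A ∈ F) :
    Set.InjOn (fun D => A ∩ D) ↑F ∧ F.card ≤ 2 ^ α := by
  have hinj : Set.InjOn (fun D => A ∩ D) (F : Set (Finset ℕ)) := by
    intro D hD E hE h
    exact Finset.Subset.antisymm (hke_sub_aux F α hF A E D hA hE hD h.symm)
      (hke_sub_aux F α hF A D E hA hD hE h)
  refine ⟨hinj, ?_⟩
  have hc : A.card = α := by
    have h1 := hF.2 {A} (by simpa using hA) (by simp)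
    have hu : famUnion {A} = A := by simp [famUnion]
    have hi : famInter {A} = A := by ext x; simp [famInter]
    rw [hu, hi] at h1
    omega
  rw [← hc, ← Finset.card_powerset]
  exact Finset.card_le_card_of_injOn (fun D => A ∩ D) (fun D _ => by simp) hinj
end

section
/- Let F be an hke collection with |F| = 2^{α(F)}. Then F is a maximal hke collection, i.e., for every set D with D ∉ F, the collection F ∪ {D} is not an hke collection. -/
open Finset

theorem hke_card_self {F : Finset (Finset ℕ)} {α : ℕ} (hF : IsHKE F α) {A : Finset ℕ}
    (hA : A ∈ F) : A.card = α := by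
  have h := hF.2 {A} (by simpa using hA) (by simp)
  have h1 : famUnion {A} = A := by simp [famUnion]
  have h2 : famInter {A} = A := by
    ext x; simp [famInter]
  rw [h1, h2] at h
  omega

theorem hke_inj {F : Finset (Finset ℕ)} {α : ℕ} (hF : IsHKE F α) {A B C : Finset ℕ}
    (hA : A ∈ F) (hB : B ∈ F) (hC : C ∈ F) (h : A ∩ C = B ∩ C) : A = B := by
  have a := hke_card_self hF hA
  have b := hke_card_self hF hB
  have c := hke_card_self hF hC
  have h3 := hF.2 {A, B, C} (by
    intro X hX
    simp only [Finset.mem_insert, Finset.mem_singleton] at hX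
    rcases hX with rfl | rfl | rfl <;> assumption) (by simp)
  have h1 : famUnion {A, B, C} = (A ∪ B) ∪ C := by
    ext x; simp [famUnion]
  have hx : ∀ x, (x ∈ A ∧ x ∈ C) ↔ (x ∈ B ∧ x ∈ C) := by
    intro x
    have := congrArg (fun s => x ∈ s) h
    simpa using this
  have h2 : famInter {A, B, C} = (A ∪ B) ∩ C := by
    ext x
    have := hx x
    simp [famInter]
    tauto
  rw [h1, h2, Finset.card_union_add_card_inter] at h3
  have e1 : A = A ∪ B := Finset.eq_of_subset_of_card_le Finset.subset_union_left (by omega)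
  have e2 : B = A ∪ B := Finset.eq_of_subset_of_card_le Finset.subset_union_right (by omega)
  exact e1.trans e2.symm

theorem hke_card_le {F : Finset (Finset ℕ)} {α : ℕ} (hF : IsHKE F α) : F.card ≤ 2 ^ α := by
  rcases F.eq_empty_or_nonempty with rfl | ⟨C, hC⟩
  · simp
  · rw [← hke_card_self hF hC, ← Finset.card_powerset]
    apply Finset.card_le_card_of_injOn (fun A => A ∩ C)
    · intro A _
      simp
    · intro A hA B hB h
      exact hke_inj hF hA hB hC h

/-- an hke collection `F` with `|F| = 2 ^ α(F)` is maximal: for every set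
`D ∉ F`, the collection `F ∪ {D}` is not an hke collection. -/
theorem maximal_of_card_eq_two_pow (F : Finset (Finset ℕ)) (α : ℕ) (hF : IsHKE F α)
    (hcard : F.card = 2 ^ α) :
    ∀ D : Finset ℕ, D ∉ F → ¬ ∃ β, IsHKE (insert D F) β := by
  rintro D hD ⟨β, hβ⟩
  have hne : F.Nonempty := by
    rw [← Finset.card_pos, hcard]; positivity
  obtain ⟨A, hA⟩ := hne
  have e1 := hke_card_self hF hA
  have e2 := hke_card_self hβ (Finset.mem_insert_of_mem hA)
  have h := hke_card_le hβ
  rw [Finset.card_insert_of_notMem hD, hcard, ← e2, e1] at h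
  omega
end

section
/- Let F be a maximal hke collection. Then ⋂F = ∅. -/
open Finset

/-- `F` is a maximal hke collection: it is an hke collection and no collection
properly containing it is an hke collection. -/
def IsMaxHKE (F : Finset (Finset ℕ)) : Prop :=
  (∃ α, IsHKE F α) ∧ ∀ F' : Finset (Finset ℕ), F ⊂ F' → ¬ ∃ β, IsHKE F' β

theorem famUnion_insert' (B : Finset ℕ) (Γ : Finset (Finset ℕ)) :
    famUnion (insert B Γ) = B ∪ famUnion Γ := by
  simp [famUnion]

theorem mem_famInter' (Γ : Finset (Finset ℕ)) (h : Γ.Nonempty) (x : ℕ) :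
    x ∈ famInter Γ ↔ ∀ A ∈ Γ, x ∈ A := by
  obtain ⟨A, hA⟩ := h
  simp only [famInter, Finset.mem_filter, Finset.mem_sup, id]
  exact ⟨fun h => h.2, fun h => ⟨⟨A, hA, h A hA⟩, h⟩⟩

theorem famInter_insert' (B : Finset ℕ) (Γ : Finset (Finset ℕ)) (h : Γ.Nonempty) :
    famInter (insert B Γ) = B ∩ famInter Γ := by
  ext x
  rw [Finset.mem_inter, mem_famInter' _ (Finset.insert_nonempty _ _), mem_famInter' _ h]
  simp

theorem famSingle' (B : Finset ℕ) : famUnion {B} = B ∧ famInter {B} = B := by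
  refine ⟨by simp [famUnion], ?_⟩
  ext x
  rw [mem_famInter' _ (Finset.singleton_nonempty _)]
  simp

/-- a maximal hke collection has empty intersection. -/
theorem famInter_eq_empty_of_isMaxHKE (F : Finset (Finset ℕ)) (h : IsMaxHKE F) :
    famInter F = ∅ := by
  obtain ⟨⟨α, hα, hF⟩, hmax⟩ := h
  rcases F.eq_empty_or_nonempty with rfl | hne
  · simp [famInter]
  by_contra hI
  have hI0 := Finset.card_pos.2 (Finset.nonempty_iff_ne_empty.2 hI)
  obtain ⟨x, hx⟩ := Finset.nonempty_iff_ne_empty.2 hI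
  obtain ⟨A, hA⟩ := hne
  have hxall := (mem_famInter' F ⟨A, hA⟩ x).1 hx
  have hAU : A ⊆ famUnion F := Finset.le_sup (f := id) hA
  have hUI := hF F subset_rfl ⟨A, hA⟩
  have hAc := hF {A} (by simpa using hA) (by simp)
  rw [(famSingle' A).1, (famSingle' A).2] at hAc
  obtain ⟨T, hT, hTc⟩ := Infinite.exists_superset_card_eq (famUnion F)
    ((famUnion F).card + (famInter F).card) (by omega)
  have hN := Finset.card_sdiff_add_card_eq_card hT
  have hUA := Finset.card_sdiff_add_card_eq_card hAU
  have hdis : Disjoint (T \ famUnion F) (famUnion F) := Finset.sdiff_disjoint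
  generalize T \ famUnion F = N at hN hdis
  have hBc : ((famUnion F \ A) ∪ N).card = α := by
    rw [Finset.card_union_of_disjoint (hdis.symm.mono_left Finset.sdiff_subset)]
    omega
  have hxA := hxall A hA
  have hBF : (famUnion F \ A) ∪ N ∉ F := by
    intro hB
    have h1 := hxall _ hB
    rcases Finset.mem_union.1 h1 with h2 | h2
    · exact (Finset.mem_sdiff.1 h2).2 hxA
    · exact Finset.disjoint_left.1 hdis h2 (hAU hxA)
  refine hmax _ (Finset.ssubset_insert hBF) ⟨α, hα, ?_⟩
  intro Γ hΓ hΓne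
  by_cases hBΓ : (famUnion F \ A) ∪ N ∈ Γ
  swap
  · exact hF Γ ((Finset.subset_insert_iff_of_notMem hBΓ).1 hΓ) hΓne
  rw [← Finset.insert_erase hBΓ]
  have hΔ := Finset.subset_insert_iff.1 hΓ
  generalize Γ.erase ((famUnion F \ A) ∪ N) = Δ at hΔ
  rcases Δ.eq_empty_or_nonempty with rfl | hΔne
  · rw [insert_empty_eq, (famSingle' _).1, (famSingle' _).2]
    omega
  have e1 := hF Δ hΔ hΔne
  have e2 := hF (insert A Δ) (Finset.insert_subset hA hΔ) (by simp)
  rw [famUnion_insert', famInter_insert' _ _ hΔne] at e2 ⊢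
  have hVU : famUnion Δ ⊆ famUnion F := Finset.sup_mono hΔ
  have hJV : famInter Δ ⊆ famUnion Δ := Finset.filter_subset _ _
  generalize famUnion Δ = V at *
  generalize famInter Δ = J at *
  generalize famUnion F = U at *
  have c1 : (U \ A ∪ N ∪ V) = (U \ (A \ V)) ∪ N := by
    ext y
    have := @hVU y
    simp only [Finset.mem_union, Finset.mem_sdiff]
    tauto
  have c2 : (U \ A ∪ N) ∩ J = J \ A := by
    ext y
    have h1 := @hVU y
    have h2 := @hJV y
    have h3 : y ∈ N → y ∉ U := fun h => Finset.disjoint_left.1 hdis h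
    simp only [Finset.mem_union, Finset.mem_sdiff, Finset.mem_inter]
    tauto
  rw [c1, c2, Finset.card_union_of_disjoint (hdis.symm.mono_left Finset.sdiff_subset)]
  have d1 := Finset.card_sdiff_add_card_eq_card ((Finset.sdiff_subset (s := A) (t := V)).trans hAU)
  have d2 := Finset.card_sdiff_add_card A V
  have d3 := Finset.card_sdiff_add_card_inter J A
  rw [Finset.inter_comm] at d3
  omega
end

section
/- Let F' = {A, B, D} be a collection of three distinct finite sets all of the same cardinality α. Then F' is an hke collection if and only if |A ∩ D − B| = |B − A − D|. -/
open Finset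

theorem famUnion_eq1 (A : Finset ℕ) : famUnion {A} = A := by
  simp [famUnion]

theorem famInter_eq1 (A : Finset ℕ) : famInter {A} = A := by
  ext x; simp [famInter]

theorem card_eq2 (A B : Finset ℕ) :
    (famUnion {A, B}).card + (famInter {A, B}).card = A.card + B.card := by
  have h1 : famUnion {A, B} = A ∪ B := by ext x; simp [famUnion]
  have h2 : famInter {A, B} = A ∩ B := by
    ext x; simp [famInter]; tauto
  rw [h1, h2, Finset.card_union_add_card_inter]

theorem card_eq3 (A B D : Finset ℕ) :
    (famUnion {A, B, D}).card + (famInter {A, B, D}).card + ((A ∩ D) \ B).card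
      = A.card + D.card + ((B \ A) \ D).card := by
  have h1 : famUnion {A, B, D} = (A ∪ D) ∪ ((B \ A) \ D) := by
    ext x; simp [famUnion]; tauto
  have h2 : famInter {A, B, D} = (A ∩ D) ∩ B := by
    ext x; simp [famInter]; tauto
  have h3 : Disjoint (A ∪ D) ((B \ A) \ D) := by
    rw [Finset.disjoint_left]; intro x; simp; tauto
  have h4 := Finset.card_inter_add_card_sdiff (A ∩ D) B
  have h5 := Finset.card_union_add_card_inter A D
  rw [h1, h2, Finset.card_union_of_disjoint h3]
  omega

/-- a collection `{A, B, D}` of three distinct finite sets of the same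
cardinality `α` is an hke collection iff `|A ∩ D − B| = |B − A − D|`. -/
theorem triple_isHKE_iff (A B D : Finset ℕ) (α : ℕ)
    (hAB : A ≠ B) (hAD : A ≠ D) (hBD : B ≠ D)
    (hA : A.card = α) (hB : B.card = α) (hD : D.card = α) :
    (∃ β, IsHKE ({A, B, D} : Finset (Finset ℕ)) β) ↔
      ((A ∩ D) \ B).card = ((B \ A) \ D).card := by
  have h3 := card_eq3 A B D
  constructor
  · rintro ⟨β, -, h⟩
    have e1 := h {A} (by simp) (by simp)
    have e3 := h {A, B, D} (by simp) (by simp)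
    rw [famUnion_eq1, famInter_eq1] at e1
    omega
  · intro h
    refine ⟨α, ?_, ?_⟩
    · rcases Nat.eq_zero_or_pos α with h0 | h0
      · subst h0
        rw [Finset.card_eq_zero] at hA
        have hB' := Finset.card_eq_zero.mp (hB.trans (by simp [hA]))
        exact absurd (hA.trans hB'.symm) hAB
      · exact h0
    · intro Γ hΓ hne
      have key : Γ = {A} ∨ Γ = {B} ∨ Γ = {D} ∨ Γ = {A, B} ∨ Γ = {A, D} ∨ Γ = {B, D} ∨
          Γ = {A, B, D} := by
        have hm : ∀ X ∈ Γ, X = A ∨ X = B ∨ X = D := by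
          intro X hX; simpa using hΓ hX
        obtain ⟨X, hX⟩ := hne
        have hX' := hm X hX
        by_cases a : A ∈ Γ <;> by_cases b : B ∈ Γ <;> by_cases d : D ∈ Γ
        · iterate 6 right
          ext Y; grind
        · iterate 3 right
          left; ext Y; grind
        · iterate 4 right
          left; ext Y; grind
        · left; ext Y; grind
        · iterate 5 right
          left; ext Y; grind
        · right; left; ext Y; grind
        · right; right; left; ext Y; grind
        · grind
      rcases key with k | k | k | k | k | k | k <;> subst k
      · rw [famUnion_eq1, famInter_eq1]; omega
      · rw [famUnion_eq1, famInter_eq1]; omega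
      · rw [famUnion_eq1, famInter_eq1]; omega
      · rw [card_eq2]; omega
      · rw [card_eq2]; omega
      · rw [card_eq2]; omega
      · omega
end

section
/- Let F be an hke collection, let A ∈ F, and let E ⊆ A. Then there exists a finite set D such that: (1) A ∩ D = E; (2) F ∪ {D} is an hke collection; and (3) |D − ⋃F| = |⋂F − E|. In particular, if ⋂F = ∅ then D ⊆ ⋃F. -/
open Finset

theorem aux_mem_union (Γ : Finset (Finset ℕ)) (x : ℕ) : x ∈ famUnion Γ ↔ ∃ B ∈ Γ, x ∈ B := by
  simp [famUnion, Finset.mem_sup]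

theorem aux_mem_inter (Γ : Finset (Finset ℕ)) (h : Γ.Nonempty) (x : ℕ) :
    x ∈ famInter Γ ↔ ∀ B ∈ Γ, x ∈ B := by
  obtain ⟨C, hC⟩ := h
  unfold famInter
  rw [Finset.mem_filter]
  refine ⟨fun h => h.2, fun h => ⟨?_, h⟩⟩
  exact (aux_mem_union Γ x).2 ⟨C, hC, h C hC⟩

def auxG (U : Finset ℕ) (Γ Δ : Finset (Finset ℕ)) : Finset ℕ :=
  U.filter (fun x => (∀ B ∈ Γ, x ∈ B) ∧ (∀ B ∈ Δ, x ∉ B))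

theorem auxG_split (U : Finset ℕ) (Γ Δ : Finset (Finset ℕ)) (C : Finset ℕ) :
    (auxG U Γ Δ).card = (auxG U (insert C Γ) Δ).card + (auxG U Γ (insert C Δ)).card := by
  rw [← Finset.card_union_of_disjoint]
  · congr 1
    ext x
    simp only [auxG, Finset.mem_union, Finset.mem_filter, Finset.forall_mem_insert]
    tauto
  · rw [Finset.disjoint_left]
    intro x
    simp only [auxG, Finset.mem_filter, Finset.forall_mem_insert]
    tauto

theorem auxG_single (F : Finset (Finset ℕ)) (α : ℕ) (hF : IsHKE F α) (A : Finset ℕ) (hA : A ∈ F)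
    (Δ : Finset (Finset ℕ)) (hΔ : Δ ⊆ F) (hne : Δ.Nonempty) :
    (auxG (famUnion F) {A} Δ).card = (auxG (famUnion F) Δ {A}).card := by
  have h1 := hF.2 Δ hΔ hne
  have h2 := hF.2 (insert A Δ) (Finset.insert_subset hA hΔ) (Finset.insert_nonempty _ _)
  have h3 : (famUnion (insert A Δ)).card = (famUnion Δ).card + (auxG (famUnion F) {A} Δ).card := by
    rw [← Finset.card_union_of_disjoint]
    · congr 1
      ext x
      simp only [auxG, Finset.mem_union, Finset.mem_filter, aux_mem_union, Finset.mem_singleton,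
        forall_eq, Finset.exists_mem_insert]
      constructor
      · rintro (h | h)
        · by_cases h' : ∃ B ∈ Δ, x ∈ B
          · exact Or.inl h'
          · exact Or.inr ⟨⟨A, hA, h⟩, h, fun B hB hx => h' ⟨B, hB, hx⟩⟩
        · exact Or.inl h
      · rintro (h | h)
        · exact Or.inr h
        · exact Or.inl h.2.1
    · rw [Finset.disjoint_left]
      intro x hx
      simp only [auxG, Finset.mem_filter]
      obtain ⟨B, hB, hxB⟩ := (aux_mem_union _ _).1 hx
      exact fun h => h.2.2 B hB hxB
  have h4 : (famInter Δ).card = (famInter (insert A Δ)).card + (auxG (famUnion F) Δ {A}).card := by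
    rw [← Finset.card_union_of_disjoint]
    · congr 1
      ext x
      simp only [auxG, Finset.mem_union, Finset.mem_filter, aux_mem_union, Finset.mem_singleton,
        forall_eq, aux_mem_inter _ hne, aux_mem_inter _ (Finset.insert_nonempty A Δ),
        Finset.forall_mem_insert]
      obtain ⟨C, hC⟩ := hne
      constructor
      · intro h
        by_cases h' : x ∈ A
        · exact Or.inl ⟨h', h⟩
        · exact Or.inr ⟨⟨C, hΔ hC, h C hC⟩, h, h'⟩
      · tauto
    · rw [Finset.disjoint_left]
      intro x hx
      rw [aux_mem_inter _ (Finset.insert_nonempty A Δ)] at hx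
      simp only [auxG, Finset.mem_filter]
      exact fun h => h.2.2 A (by simp) (hx A (by simp))
  omega

theorem auxG_symm (F : Finset (Finset ℕ)) (α : ℕ) (hF : IsHKE F α)
    (Γ : Finset (Finset ℕ)) (hne : Γ.Nonempty) :
    Γ ⊆ F → ∀ Δ ⊆ F, Δ.Nonempty →
    (auxG (famUnion F) Γ Δ).card = (auxG (famUnion F) Δ Γ).card := by
  induction hne using Finset.Nonempty.cons_induction with
  | singleton A =>
    intro h Δ hΔ hn
    exact auxG_single F α hF A (h (by simp)) Δ hΔ hn
  | cons C Γ hC hn ih =>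
    rw [Finset.cons_eq_insert]
    intro h Δ hΔ hd
    have hCF : C ∈ F := h (by simp)
    have hΓ : Γ ⊆ F := fun x hx => h (by simp [hx])
    have e1 := ih hΓ Δ hΔ hd
    have e2 := ih hΓ (insert C Δ) (Finset.insert_subset hCF hΔ) (Finset.insert_nonempty _ _)
    have e3 := auxG_split (famUnion F) Γ Δ C
    have e4 := auxG_split (famUnion F) Δ Γ C
    omega

theorem aux_inj (S T : Finset ℕ) (h : S.card ≤ T.card) :
    ∃ φ : ℕ → ℕ, Set.InjOn φ S ∧ ∀ x ∈ S, φ x ∈ T := by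
  obtain ⟨T', hT', hc⟩ := Finset.exists_subset_card_eq h
  let e := Finset.equivOfCardEq hc.symm
  refine ⟨fun x => if hx : x ∈ S then (e ⟨x, hx⟩ : ℕ) else 0, ?_, ?_⟩
  · intro x hx y hy hxy
    have hx' : x ∈ S := hx
    have hy' : y ∈ S := hy
    simp only [hx', hy', dif_pos] at hxy
    have := e.injective (Subtype.ext hxy)
    simpa using this
  · intro x hx
    simp only [hx, dif_pos]
    exact hT' (e ⟨x, hx⟩).2

/-- The matching function. -/
theorem aux_match (F : Finset (Finset ℕ)) (α : ℕ) (hF : IsHKE F α)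
    (A : Finset ℕ) (hA : A ∈ F) :
    ∃ f : ℕ → ℕ, Set.InjOn f A ∧ ∀ x ∈ A, ∀ B ∈ F, (f x ∈ B ↔ x ∉ B) := by
  have key : ∀ k : Finset (Finset ℕ), ∃ φ : ℕ → ℕ,
      Set.InjOn φ (A.filter (fun x => F.filter (fun B => x ∉ B) = k) : Finset ℕ) ∧
      ∀ x ∈ A.filter (fun x => F.filter (fun B => x ∉ B) = k),
        F.filter (fun B => φ x ∈ B) = k := by
    intro k
    by_cases hk : k = ∅
    · subst hk
      refine ⟨fun x => x + ((famUnion F).sup id + 1), fun x _ y _ h => by simpa using h, ?_⟩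
      intro x _
      rw [Finset.filter_eq_empty_iff]
      intro B hB hx
      have : x + ((famUnion F).sup id + 1) ≤ (famUnion F).sup id :=
        Finset.le_sup (f := id) ((aux_mem_union F _).2 ⟨B, hB, hx⟩)
      omega
    · by_cases hkF : k ⊆ F ∧ A ∉ k
      · obtain ⟨hkF, hAk⟩ := hkF
        have hs := auxG_symm F α hF k (Finset.nonempty_iff_ne_empty.2 hk) hkF (F \ k)
          Finset.sdiff_subset ⟨A, by simp [hA, hAk]⟩
        have h1 : A.filter (fun x => F.filter (fun B => x ∉ B) = k)
            ⊆ auxG (famUnion F) (F \ k) k := by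
          intro x hx
          simp only [Finset.mem_filter] at hx
          obtain ⟨hxA, rfl⟩ := hx
          simp only [auxG, Finset.mem_filter, aux_mem_union, Finset.mem_sdiff]
          refine ⟨⟨A, hA, hxA⟩, ?_, ?_⟩
          · intro B hB
            by_contra h
            exact hB.2 ⟨hB.1, h⟩
          · intro B hB
            exact hB.2
        obtain ⟨φ, hi, hm⟩ := aux_inj _ _ ((Finset.card_le_card h1).trans hs.symm.le)
        refine ⟨φ, hi, fun x hx => ?_⟩
        have := hm x hx
        simp only [auxG, Finset.mem_filter, Finset.mem_sdiff] at this
        ext B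
        simp only [Finset.mem_filter]
        constructor
        · rintro ⟨hB, hx⟩
          by_contra h
          exact this.2.2 B ⟨hB, h⟩ hx
        · intro hB
          exact ⟨hkF hB, this.2.1 B hB⟩
      · refine ⟨id, Function.injective_id.injOn, fun x hx => ?_⟩
        exfalso
        simp only [Finset.mem_filter] at hx
        obtain ⟨hxA, rfl⟩ := hx
        exact hkF ⟨Finset.filter_subset _ _, by simp [hxA]⟩
  choose φ hφ hm using key
  have hm' : ∀ x ∈ A, F.filter (fun B => φ (F.filter (fun B => x ∉ B)) x ∈ B)
      = F.filter (fun B => x ∉ B) := fun x hx => hm _ x (by simp [hx])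
  refine ⟨fun x => φ (F.filter (fun B => x ∉ B)) x, ?_, ?_⟩
  · intro x hx y hy hxy
    have hx' : x ∈ A := hx
    have hy' : y ∈ A := hy
    dsimp only at hxy
    have h : F.filter (fun B => x ∉ B) = F.filter (fun B => y ∉ B) := by
      rw [← hm' x hx', ← hm' y hy', hxy]
    rw [← h] at hxy
    refine hφ _ ?_ ?_ hxy
    · simp [hx']
    · simp [hy', h]
  · intro x hx B hB
    have := Finset.ext_iff.1 (hm' x hx) B
    simp only [Finset.mem_filter, hB, true_and] at this
    exact this

theorem aux_card (A : Finset ℕ) (f : ℕ → ℕ) (hf : Set.InjOn f A) (hd : ∀ x ∈ A, f x ∉ A)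
    (S : Finset ℕ) (hS : ∀ y ∈ S, y ∉ A → ∃ x ∈ A, f x = y) :
    S.card = (A.filter (fun x => x ∈ S)).card + (A.filter (fun x => f x ∈ S)).card := by
  rw [← Finset.card_image_of_injOn (s := A.filter (fun x => f x ∈ S)) (f := f)
    (hf.mono (by intro x hx; simp at hx; exact hx.1)), ← Finset.card_union_of_disjoint]
  · congr 1
    ext y
    simp only [Finset.mem_union, Finset.mem_filter, Finset.mem_image]
    constructor
    · intro hy
      by_cases h : y ∈ A
      · exact Or.inl ⟨h, hy⟩
      · obtain ⟨x, hx, rfl⟩ := hS y hy h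
        exact Or.inr ⟨x, ⟨hx, hy⟩, rfl⟩
    · rintro (h | ⟨x, hx, rfl⟩)
      · exact h.2
      · exact hx.2
  · rw [Finset.disjoint_left]
    intro y hy hy'
    simp only [Finset.mem_filter, Finset.mem_image] at hy hy'
    obtain ⟨x, hx, rfl⟩ := hy'
    exact hd x hx.1 hy.1

/-- for an hke collection `F`, `A ∈ F` and `E ⊆ A`, there is a finite set `D`
with `A ∩ D = E`, such that `F ∪ {D}` is an hke collection and `|D − ⋃F| = |⋂F − E|`;
in particular, if `⋂F = ∅` then `D ⊆ ⋃F`. -/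
theorem exists_extension_set (F : Finset (Finset ℕ)) (α : ℕ) (hF : IsHKE F α)
    (A : Finset ℕ) (hA : A ∈ F) (E : Finset ℕ) (hE : E ⊆ A) :
    ∃ D : Finset ℕ,
      A ∩ D = E ∧
      (∃ β, IsHKE (insert D F) β) ∧
      (D \ famUnion F).card = (famInter F \ E).card ∧
      (famInter F = ∅ → D ⊆ famUnion F) := by
  obtain ⟨f, hf, hm⟩ := aux_match F α hF A hA
  have hd : ∀ x ∈ A, f x ∉ A := fun x hx h => (hm x hx A hA).1 h hx
  have hcard : ∀ B ∈ F, B.card = α := by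
    intro B hB
    have := hF.2 {B} (by simpa using hB) (by simp)
    have h1 : famUnion {B} = B := by simp [famUnion]
    have h2 : famInter {B} = B := by ext; simp [aux_mem_inter]
    rw [h1, h2] at this
    omega
  -- every member is covered
  have hcov : ∀ B ∈ F, ∀ y ∈ B, y ∉ A → ∃ x ∈ A, f x = y := by
    intro B hB y hy hyA
    have hsub : B.filter (fun y => y ∈ A ∨ ∃ x ∈ A, f x = y) ⊆ B := Finset.filter_subset _ _
    have hc := aux_card A f hf hd (B.filter (fun y => y ∈ A ∨ ∃ x ∈ A, f x = y)) (by
      intro y hy hyA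
      exact (Finset.mem_filter.1 hy).2.resolve_left hyA)
    have e1 : A.filter (fun x => x ∈ B.filter (fun y => y ∈ A ∨ ∃ x ∈ A, f x = y))
        = A.filter (fun x => x ∈ B) := by
      apply Finset.filter_congr
      intro x hx
      simp [hx]
    have e2 : A.filter (fun x => f x ∈ B.filter (fun y => y ∈ A ∨ ∃ x ∈ A, f x = y))
        = A.filter (fun x => ¬ x ∈ B) := by
      apply Finset.filter_congr
      intro x hx
      rw [← hm x hx B hB, Finset.mem_filter]
      exact ⟨fun h => h.1, fun h => ⟨h, Or.inr ⟨x, hx, rfl⟩⟩⟩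
    rw [e1, e2, Finset.card_filter_add_card_filter_not, hcard A hA] at hc
    have := Finset.eq_of_subset_of_card_le hsub (by rw [hc, hcard B hB])
    rw [← this] at hy
    exact (Finset.mem_filter.1 hy).2.resolve_left hyA
  have hDmem : ∀ x ∈ A, (f x ∈ E ∪ (A \ E).image f ↔ x ∉ E ∪ (A \ E).image f) := by
    intro x hx
    have h1 : f x ∉ E := fun h => hd x hx (hE h)
    have h2 : x ∉ (A \ E).image f := by
      intro h
      obtain ⟨z, hz, hzx⟩ := Finset.mem_image.1 h
      exact hd z (Finset.mem_sdiff.1 hz).1 (hzx ▸ hx)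
    rw [Finset.mem_union, Finset.mem_union, or_iff_right h1, or_iff_left h2]
    constructor
    · intro h
      obtain ⟨z, hz, hzx⟩ := Finset.mem_image.1 h
      rw [Finset.mem_sdiff] at hz
      rw [← hf hz.1 hx hzx]
      exact hz.2
    · intro h
      exact Finset.mem_image_of_mem f (Finset.mem_sdiff.2 ⟨hx, h⟩)
  have h3 : ((E ∪ (A \ E).image f) \ famUnion F).card = (famInter F \ E).card := by
    have hIA : famInter F ⊆ A := fun x hx => (aux_mem_inter F ⟨A, hA⟩ x).1 hx A hA
    rw [← Finset.card_image_of_injOn (s := famInter F \ E) (f := f) (hf.mono (by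
      intro x hx
      exact hIA (Finset.mem_sdiff.1 (Finset.mem_coe.1 hx)).1))]
    congr 1
    ext y
    simp only [Finset.mem_sdiff, Finset.mem_union, Finset.mem_image, aux_mem_union,
      aux_mem_inter F ⟨A, hA⟩]
    constructor
    · rintro ⟨h | ⟨x, hx, rfl⟩, hn⟩
      · exact absurd ⟨A, hA, hE h⟩ hn
      · refine ⟨x, ⟨fun B hB => ?_, hx.2⟩, rfl⟩
        by_contra h
        exact hn ⟨B, hB, (hm x hx.1 B hB).2 h⟩
    · rintro ⟨x, ⟨hx, hxE⟩, rfl⟩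
      refine ⟨Or.inr ⟨x, ⟨hx A hA, hxE⟩, rfl⟩, ?_⟩
      rintro ⟨B, hB, h⟩
      exact (hm x (hx A hA) B hB).1 h (hx B hB)
  refine ⟨E ∪ (A \ E).image f, ?_, ⟨α, hF.1, ?_⟩, h3, ?_⟩
  · ext y
    simp only [Finset.mem_inter, Finset.mem_union, Finset.mem_image, Finset.mem_sdiff]
    constructor
    · rintro ⟨hy, h | ⟨x, hx, rfl⟩⟩
      · exact h
      · exact absurd hy (hd x hx.1)
    · intro h
      exact ⟨hE h, Or.inl h⟩
  · intro Γ hΓ hne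
    have hm2 : ∀ B ∈ Γ, ∀ x ∈ A, (f x ∈ B ↔ x ∉ B) := by
      intro B hB x hx
      rcases Finset.mem_insert.1 (hΓ hB) with rfl | h
      · exact hDmem x hx
      · exact hm x hx B h
    have hcov2 : ∀ B ∈ Γ, ∀ y ∈ B, y ∉ A → ∃ x ∈ A, f x = y := by
      intro B hB y hy hyA
      rcases Finset.mem_insert.1 (hΓ hB) with rfl | h
      · rcases Finset.mem_union.1 hy with h | h
        · exact absurd (hE h) hyA
        · obtain ⟨z, hz, hzx⟩ := Finset.mem_image.1 h
          exact ⟨z, (Finset.mem_sdiff.1 hz).1, hzx⟩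
      · exact hcov B h y hy hyA
    have c1 := aux_card A f hf hd (famUnion Γ) (by
      intro y hy
      obtain ⟨B, hB, hy⟩ := (aux_mem_union Γ y).1 hy
      exact hcov2 B hB y hy)
    have c2 := aux_card A f hf hd (famInter Γ) (by
      intro y hy
      obtain ⟨B, hB⟩ := hne
      exact hcov2 B hB y ((aux_mem_inter Γ ⟨B, hB⟩ y).1 hy B hB))
    have e1 : A.filter (fun x => f x ∈ famInter Γ) = A.filter (fun x => ¬ x ∈ famUnion Γ) := by
      apply Finset.filter_congr
      intro x hx
      rw [aux_mem_inter Γ hne, aux_mem_union]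
      push Not
      exact forall₂_congr fun B hB => hm2 B hB x hx
    have e2 : A.filter (fun x => f x ∈ famUnion Γ) = A.filter (fun x => ¬ x ∈ famInter Γ) := by
      apply Finset.filter_congr
      intro x hx
      rw [aux_mem_inter Γ hne, aux_mem_union]
      push Not
      exact exists_congr fun B => and_congr_right fun hB => hm2 B hB x hx
    have s1 := Finset.card_filter_add_card_filter_not (s := A) (fun x => x ∈ famUnion Γ)
    have s2 := Finset.card_filter_add_card_filter_not (s := A) (fun x => x ∈ famInter Γ)
    rw [e2] at c1
    rw [e1] at c2
    have := hcard A hA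
    omega
  · intro h
    rw [h] at h3
    simpa [Finset.sdiff_eq_empty_iff_subset] using h3
end
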